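/- arXiv:2603.00298 — 2 statements merged into one kernel-verified Lean document; each statement's English description precedes it below -/
import Mathlib

section
/- Let G be a finite simple graph with a perfect matching, let v be a vertex of G, and let M₁ and M₂ be two perfect matchings of G. Then the reachable set of v with respect to M₁ equals the reachable set of v with respect to M₂, i.e., R(M₁, v) = R(M₂, v). -/
open SimpleGraph

variable {V : Type*} [Fintype V] [DecidableEq V]

/-- `M` is a matching of `G`: a set of edges of `G` that are pairwise nonadjacent
(no two distinct edges of `M` share an endpoint). -/
def IsMatching' (G : SimpleGraph V) (M : Finset (Sym2 V)) : Prop :=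
  (∀ e ∈ M, e ∈ G.edgeSet) ∧
  ∀ e ∈ M, ∀ f ∈ M, e ≠ f → ∀ x : V, x ∈ e → x ∉ f

/-- A matching is perfect if every vertex is an endpoint of some edge of `M`. -/
def IsPerfectMatching' (G : SimpleGraph V) (M : Finset (Sym2 V)) : Prop :=
  IsMatching' G M ∧ ∀ v : V, ∃ e ∈ M, v ∈ e

/-- A matching is maximum if it has the largest possible cardinality among matchings. -/
def IsMaximumMatching' (G : SimpleGraph V) (M : Finset (Sym2 V)) : Prop :=
  IsMatching' G M ∧ ∀ N : Finset (Sym2 V), IsMatching' G N → N.card ≤ M.card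

/-- A walk is `M`-alternating: for each pair of consecutive edges of the walk,
exactly one of them belongs to `M`. -/
def IsAltWalk {G : SimpleGraph V} (M : Finset (Sym2 V)) {u v : V} (w : G.Walk u v) : Prop :=
  List.Chain' (fun e f => (e ∈ M ↔ f ∉ M)) w.edges

/-- A walk is `M`-mm-alternating: it is `M`-alternating and its first and last
edges belong to `M` (in particular the walk has at least one edge). -/
def IsMMAltWalk {G : SimpleGraph V} (M : Finset (Sym2 V)) {u v : V} (w : G.Walk u v) : Prop :=
  IsAltWalk M w ∧ (∃ e, w.edges.head? = some e ∧ e ∈ M) ∧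
    (∃ e, w.edges.getLast? = some e ∧ e ∈ M)

/-- A walk is `M`-nn-alternating: it is `M`-alternating and its first and last
edges do not belong to `M`. -/
def IsNNAltWalk {G : SimpleGraph V} (M : Finset (Sym2 V)) {u v : V} (w : G.Walk u v) : Prop :=
  IsAltWalk M w ∧ (∃ e, w.edges.head? = some e ∧ e ∉ M) ∧
    (∃ e, w.edges.getLast? = some e ∧ e ∉ M)

/-- The reachable set `R(M, v)`: vertices `u` admitting an `M`-mm-alternating walk
from `v` to `u`. -/
def Reach (G : SimpleGraph V) (M : Finset (Sym2 V)) (v : V) : Set V :=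
  {u | ∃ w : G.Walk v u, IsMMAltWalk M w}

/-- `c` is an `M`-blossom with base `b`: an odd cycle of length `2k+1` containing
exactly `k` edges of `M`, whose base `b` is not matched by `M` within the cycle. -/
def IsBlossom (G : SimpleGraph V) (M : Finset (Sym2 V)) {b : V} (c : G.Walk b b) : Prop :=
  c.IsCycle ∧ Odd c.length ∧
  2 * (c.edges.countP (fun e => decide (e ∈ M))) + 1 = c.length ∧
  ∀ e ∈ c.edges, e ∈ M → b ∉ e

/-- An `M`-Jposy: two (not necessarily distinct) `M`-blossoms joined by an
odd-length `M`-alternating walk whose endpoints are the bases of the blossoms. -/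
structure Jposy (G : SimpleGraph V) (M : Finset (Sym2 V)) where
  b₁ : V
  b₂ : V
  c₁ : G.Walk b₁ b₁
  c₂ : G.Walk b₂ b₂
  walk : G.Walk b₁ b₂
  blossom₁ : IsBlossom G M c₁
  blossom₂ : IsBlossom G M c₂
  odd : Odd walk.length
  alt : IsAltWalk M walk

/-- The vertices of a Jposy: the vertices of its two blossoms and of its joining walk. -/
def Jposy.verts {G : SimpleGraph V} {M : Finset (Sym2 V)} (J : Jposy G M) : Set V :=
  {v | v ∈ J.c₁.support ∨ v ∈ J.c₂.support ∨ v ∈ J.walk.support}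

/-- `v` belongs to some `M`-Jposy of `G`. -/
def InJposy (G : SimpleGraph V) (M : Finset (Sym2 V)) (v : V) : Prop :=
  ∃ J : Jposy G M, v ∈ J.verts

/-- `V_SD(G)`: vertices belonging to an `M`-Jposy for some maximum matching `M` of `G`. -/
def VSD (G : SimpleGraph V) : Set V :=
  {v | ∃ M : Finset (Sym2 V), IsMaximumMatching' G M ∧ InJposy G M v}

/-- Mates of a perfect matching. -/
theorem exists_mate (G : SimpleGraph V) (M : Finset (Sym2 V)) (h : IsPerfectMatching' G M) :
    ∃ m : V → V, (∀ u, G.Adj u (m u)) ∧ (∀ u, s(u, m u) ∈ M) ∧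
      (∀ u x, s(u, x) ∈ M → x = m u) ∧ (∀ u, m (m u) = u) := by
  have h1 : ∀ u : V, ∃ x, s(u, x) ∈ M := by
    intro u
    obtain ⟨e, he, hu⟩ := h.2 u
    obtain ⟨x, rfl⟩ := Sym2.mem_iff_exists.1 hu
    exact ⟨x, he⟩
  choose m hm using h1
  have huniq : ∀ u x, s(u, x) ∈ M → x = m u := by
    intro u x hx
    by_contra hne
    refine h.1.2 _ hx _ (hm u) ?_ u (Sym2.mem_mk_left _ _) (Sym2.mem_mk_left _ _)
    intro heq
    exact hne (Sym2.congr_right.1 heq)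
  refine ⟨m, fun u => (h.1.1 _ (hm u) : _), hm, huniq, fun u => ?_⟩
  refine (huniq _ _ ?_).symm
  rw [Sym2.eq_swap]
  exact hm u

theorem reach_step (G : SimpleGraph V) (M : Finset (Sym2 V)) (v : V) (m : V → V)
    (hadj : ∀ u, G.Adj u (m u)) (hm : ∀ u, s(u, m u) ∈ M)
    (hu : ∀ u x, s(u, x) ∈ M → x = m u) (hinv : ∀ u, m (m u) = u)
    (u x : V) (hR : u ∈ Reach G M v) (hx : G.Adj u x) : m x ∈ Reach G M v := by
  by_cases hM : s(u, x) ∈ M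
  · rw [hu _ _ hM, hinv]; exact hR
  · obtain ⟨w, hw, ⟨e, he, heM⟩, ⟨f, hf, hfM⟩⟩ := hR
    refine ⟨w.append (Walk.cons hx (Walk.cons (hadj x) Walk.nil)), ?_, ⟨e, ?_, heM⟩,
      ⟨s(x, m x), ?_, hm x⟩⟩
    · unfold IsAltWalk at hw ⊢
      rw [Walk.edges_append]
      refine List.IsChain.append hw ?_ ?_
      · simp [hM, hm]
      · intro a ha b hb
        rw [hf] at ha
        simp at ha hb
        subst ha hb
        simp [hfM, hM]
    · simp [Walk.edges_append, List.head?_append, he]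
    · simp [Walk.edges_append, List.getLast?_append]

theorem reach_base (G : SimpleGraph V) (M : Finset (Sym2 V)) (v : V) (m : V → V)
    (hadj : ∀ u, G.Adj u (m u)) (hm : ∀ u, s(u, m u) ∈ M) : m v ∈ Reach G M v := by
  refine ⟨Walk.cons (hadj v) Walk.nil, ?_, ⟨s(v, m v), ?_, hm v⟩, ⟨s(v, m v), ?_, hm v⟩⟩
  · exact List.isChain_singleton _
  · simp
  · simp

theorem alt_closed (G : SimpleGraph V) (M : Finset (Sym2 V)) (m : V → V)
    (hu : ∀ u x, s(u, x) ∈ M → x = m u) (S : Set V)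
    (hS : ∀ u ∈ S, ∀ x, G.Adj u x → m x ∈ S) {a b : V} (w : G.Walk a b)
    (hw : IsAltWalk M w) (hl : ∃ e, w.edges.getLast? = some e ∧ e ∈ M) :
    (∀ e, w.edges.head? = some e → e ∈ M → m a ∈ S → b ∈ S) ∧
    (∀ e, w.edges.head? = some e → e ∉ M → a ∈ S → b ∈ S) := by
  induction w with
  | nil => simp at hl
  | @cons a c b h p ih =>
    cases p with
    | nil =>
      obtain ⟨f, hf, hfM⟩ := hl
      simp at hf
      subst hf
      refine ⟨fun e he heM ha => ?_, fun e he heM ha => ?_⟩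
      · rw [hu _ _ hfM]; exact ha
      · simp at he; subst he; exact absurd hfM heM
    | @cons _ d _ h' p' =>
      unfold IsAltWalk at hw ih
      simp only [Walk.edges_cons] at hw ih hl
      have hw2 := List.isChain_cons_cons.1 hw
      rw [List.getLast?_cons_cons] at hl
      obtain ⟨i1, i2⟩ := ih hw2.2 hl
      refine ⟨fun e he heM ha => ?_, fun e he heM ha => ?_⟩
      · simp at he; subst he
        refine i2 _ rfl (hw2.1.1 heM) ?_
        rw [hu _ _ heM]; exact ha
      · simp at he; subst he
        refine i1 _ rfl ?_ (hS _ ha _ h)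
        by_contra hc
        exact heM (hw2.1.2 hc)

theorem reach_sub (G : SimpleGraph V) (v : V) (M₁ M₂ : Finset (Sym2 V))
    (h₁ : IsPerfectMatching' G M₁) (h₂ : IsPerfectMatching' G M₂) :
    Reach G M₂ v ⊆ Reach G M₁ v := by
  obtain ⟨m, ma, mM, mu, mi⟩ := exists_mate G M₁ h₁
  obtain ⟨n, na, nM, nu, ni⟩ := exists_mate G M₂ h₂
  set R := Reach G M₁ v with hRdef
  have step := reach_step G M₁ v m ma mM mu mi
  have base := reach_base G M₁ v m ma mM
  -- `n` maps `R` into the preimage of `R` under `m`; by finiteness, it is onto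
  have key : ∀ x, m x ∈ R → n x ∈ R := by
    have hmaps : Set.MapsTo (fun u => m (n u)) R R := fun u hu => step u (n u) hu (na u)
    have hinj : Set.InjOn (fun u => m (n u)) R := by
      intro a _ b _ hab
      have := congrArg m hab
      simp only [mi] at this
      simpa [ni] using congrArg n this
    have hsurj := (((Set.toFinite R).injOn_iff_bijOn_of_mapsTo hmaps).1 hinj).surjOn
    intro x hx
    obtain ⟨u, hu, hux⟩ := hsurj hx
    have := congrArg m hux
    simp only [mi] at this
    rw [← this, ni]; exact hu
  intro b hb
  obtain ⟨w, hw, ⟨e, he, heM⟩, hl⟩ := hb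
  exact (alt_closed G M₂ n nu R (fun u hu x hx => key x (step u x hu hx)) w hw hl).1 e he heM
    (key v base)

theorem reachability_lemma (G : SimpleGraph V) (v : V) (M₁ M₂ : Finset (Sym2 V))
    (h₁ : IsPerfectMatching' G M₁) (h₂ : IsPerfectMatching' G M₂) :
    Reach G M₁ v = Reach G M₂ v :=
  Set.Subset.antisymm (reach_sub G v M₂ M₁ h₂ h₁) (reach_sub G v M₁ M₂ h₁ h₂)
end

section
/- Let G be a finite simple graph with a perfect matching and let M be a perfect matching of G. Then every vertex v in V_SD(G) belongs to some M-Jposy (i.e., a Jposy with respect to this particular perfect matching M). -/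
open SimpleGraph

variable {V : Type*} [Fintype V] [DecidableEq V]

set_option linter.unusedSectionVars false
set_option linter.unusedVariables false
open Relation

def PL {V : Type*} (R : V → V → Prop) : V → List V → V → Prop
  | a, [], b => R a b
  | a, c :: l, b => R a c ∧ PL R c l b

def Fl {V : Type*} (f : V → V) (l : List V) : List V := l.flatMap (fun z => [z, f z])

section abs
variable {V : Type*}

theorem PL_append {R : V → V → Prop} {c b : V} {l' : List V} : ∀ {l : List V} {a : V},
    PL R a (l ++ c :: l') b ↔ PL R a l c ∧ PL R c l' b
  | [], a => by simp [PL]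
  | d :: l, a => by simp [PL, PL_append (l := l), and_assoc]

theorem PL_trans {R : V → V → Prop} {b : V} : ∀ {l : List V} {a : V},
    PL R a l b → TransGen R a b
  | [], a, h => TransGen.single h
  | d :: l, a, h => TransGen.head h.1 (PL_trans h.2)

theorem exists_PL {R : V → V → Prop} {a b : V} (h : TransGen R a b) : ∃ l, PL R a l b := by
  induction h using TransGen.head_induction_on with
  | single h => exact ⟨[], h⟩
  | head h _ ih => obtain ⟨l, hl⟩ := ih; exact ⟨_ :: l, h, hl⟩

theorem PL_mem {R : V → V → Prop} {a b z : V} {l : List V} (h : PL R a l b) (hz : z ∈ l) :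
    TransGen R a z ∧ TransGen R z b := by
  obtain ⟨s, t, rfl⟩ := List.append_of_mem hz
  obtain ⟨h1, h2⟩ := PL_append.1 h
  exact ⟨PL_trans h1, PL_trans h2⟩

theorem exists_PL_nodup {R : V → V → Prop} {a b : V} (h : TransGen R a b) :
    ∃ l, PL R a l b ∧ (a :: l).Nodup := by
  induction h using TransGen.head_induction_on with
  | single h => exact ⟨[], h, by simp⟩
  | @head a c h _ ih =>
    obtain ⟨l, hl, hn⟩ := ih
    by_cases ha : a ∈ c :: l
    · obtain ⟨s, t, hst⟩ := List.append_of_mem ha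
      have h1 : PL R a (s ++ a :: t) b := by rw [← hst]; exact ⟨h, hl⟩
      rw [hst] at hn
      exact ⟨t, (PL_append.1 h1).2, (List.nodup_append.1 hn).2.1⟩
    · exact ⟨c :: l, ⟨h, hl⟩, List.nodup_cons.2 ⟨ha, hn⟩⟩

def Simp (f : V → V) (l : List V) : Prop := l.Nodup ∧ ∀ x ∈ l, f x ∉ l

theorem Simp.sub {f : V → V} {l l' : List V} (h : Simp f l) (hs : l'.Sublist l) : Simp f l' :=
  ⟨h.1.sublist hs, fun x hx hx' => h.2 x (hs.subset hx) (hs.subset hx')⟩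

structure MP (G : SimpleGraph V) (f : Equiv.Perm V) : Prop where
  inv : ∀ x, f (f x) = x
  adj : ∀ x, G.Adj x (f x)

theorem MP.ne {G : SimpleGraph V} {f : Equiv.Perm V} (h : MP G f) (x : V) : f x ≠ x :=
  (h.adj x).ne'

theorem Simp.fl {G : SimpleGraph V} {f : Equiv.Perm V} (hf : MP G f) {l : List V} :
    (Fl f l).Nodup ↔ Simp f l := by
  induction l with
  | nil => simp [Fl, Simp]
  | cons a l ih =>
    have hm : ∀ z, z ∈ Fl f l ↔ z ∈ l ∨ f z ∈ l := by
      intro z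
      simp only [Fl, List.mem_flatMap, List.mem_cons, List.not_mem_nil, or_false]
      constructor
      · rintro ⟨w, hw, rfl | rfl⟩
        · exact Or.inl hw
        · right; rwa [hf.inv]
      · rintro (h | h)
        · exact ⟨z, h, Or.inl rfl⟩
        · exact ⟨f z, h, Or.inr (hf.inv z).symm⟩
    have hc : Fl f (a :: l) = a :: f a :: Fl f l := by simp [Fl]
    rw [hc, List.nodup_cons, List.nodup_cons, ih, List.mem_cons, hm, hm, hf.inv]
    constructor
    · rintro ⟨h1, h2, h3, h4⟩
      push Not at h1 h2
      refine ⟨List.nodup_cons.2 ⟨h1.2.1, h3⟩, ?_⟩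
      intro x hx hx'
      rcases List.mem_cons.1 hx with rfl | hx
      · rcases List.mem_cons.1 hx' with h | h
        · exact hf.ne _ h
        · exact h2.1 h
      · rcases List.mem_cons.1 hx' with h | h
        · apply h2.1; rw [← h, hf.inv]; exact hx
        · exact h4 x hx h
    · rintro ⟨h1, h2⟩
      have h3 := List.nodup_cons.1 h1
      have h4 := h2 a (by simp)
      simp only [List.mem_cons, not_or] at h4
      refine ⟨?_, ?_, h3.2, fun x hx hx' => h2 x (by simp [hx]) (by simp [hx'])⟩
      · push Not; exact ⟨(hf.ne a).symm, h3.1, h4.2⟩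
      · push Not; exact ⟨h4.2, h3.1⟩

/-- implication step -/
def St (G : SimpleGraph V) (f : Equiv.Perm V) (z z' : V) : Prop := G.Adj (f z) z' ∧ z' ≠ z

def Bs (G : SimpleGraph V) (f : Equiv.Perm V) (b : V) : Prop :=
  ∃ l, PL (St G f) (f b) l b ∧ Simp f (f b :: l)

theorem St.contra {G : SimpleGraph V} {f : Equiv.Perm V} (hf : MP G f) {x y : V}
    (h : St G f x y) : St G f (f y) (f x) :=
  ⟨by rw [hf.inv]; exact h.1.symm, fun e => h.2 (f.injective e).symm⟩

theorem TG.contra {G : SimpleGraph V} {f : Equiv.Perm V} (hf : MP G f) {x y : V}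
    (h : TransGen (St G f) x y) : TransGen (St G f) (f y) (f x) := by
  induction h with
  | single h => exact .single (h.contra hf)
  | tail _ h ih => exact .head (h.contra hf) ih

theorem RT.contra {G : SimpleGraph V} {f : Equiv.Perm V} (hf : MP G f) {x y : V}
    (h : ReflTransGen (St G f) x y) : ReflTransGen (St G f) (f y) (f x) := by
  rcases reflTransGen_iff_eq_or_transGen.1 h with rfl | h
  · exact .refl
  · exact (TG.contra hf h).to_reflTransGen

theorem TG_of_RT_ne {R : V → V → Prop} {x y : V} (h : ReflTransGen R x y) (hne : x ≠ y) :
    TransGen R x y := by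
  rcases reflTransGen_iff_eq_or_transGen.1 h with rfl | h
  · exact absurd rfl hne
  · exact h

theorem orbit_step {G : SimpleGraph V} {f g : Equiv.Perm V} (hf : MP G f)
    (z : V) (n : ℕ) : ReflTransGen (St G g) z (((f * g) ^ n) z) := by
  induction n with
  | zero => exact .refl
  | succ n ih =>
    rw [pow_succ']
    by_cases h : ((f * g) * (f * g) ^ n) z = ((f * g) ^ n) z
    · rw [h]; exact ih
    · exact ih.tail ⟨hf.adj _, h⟩

theorem gf_reach [Finite V] {G : SimpleGraph V} {f g : Equiv.Perm V} (hf : MP G f) (hg : MP G g)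
    (z : V) : ReflTransGen (St G g) z (g (f z)) := by
  have h := orbit_step (g := g) hf z (orderOf (f * g) - 1)
  have h2 : ((f * g) ^ (orderOf (f * g) - 1)) = (f * g)⁻¹ := by
    have := orderOf_pos (f * g)
    rw [eq_inv_iff_mul_eq_one, ← pow_succ, Nat.sub_add_cancel this, pow_orderOf_eq_one]
  have h3 : (f * g)⁻¹ z = g (f z) := by
    rw [Equiv.Perm.inv_eq_iff_eq]; simp [hg.inv, hf.inv]
  rwa [h2, h3] at h

theorem St.tr [Finite V] {G : SimpleGraph V} {f g : Equiv.Perm V} (hf : MP G f) (hg : MP G g)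
    {x y : V} (h : St G f x y) : TransGen (St G g) x y := by
  have h1 := gf_reach hf hg x
  by_cases e : y = g (f x)
  · rw [← e] at h1; exact TG_of_RT_ne h1 h.2.symm
  · exact TransGen.tail' h1 ⟨by rw [hg.inv]; exact h.1, e⟩

theorem TG.tr [Finite V] {G : SimpleGraph V} {f g : Equiv.Perm V} (hf : MP G f) (hg : MP G g)
    {x y : V} (h : TransGen (St G f) x y) : TransGen (St G g) x y := by
  induction h with
  | single h => exact h.tr hf hg
  | tail _ h ih => exact ih.trans (h.tr hf hg)

theorem RT.tr [Finite V] {G : SimpleGraph V} {f g : Equiv.Perm V} (hf : MP G f) (hg : MP G g)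
    {x y : V} (h : ReflTransGen (St G f) x y) : ReflTransGen (St G g) x y := by
  rcases reflTransGen_iff_eq_or_transGen.1 h with rfl | h
  · exact .refl
  · exact (TG.tr hf hg h).to_reflTransGen

theorem g_to_f {G : SimpleGraph V} {f g : Equiv.Perm V} (hf : MP G f) (hg : MP G g)
    (z : V) : ReflTransGen (St G g) (g z) (f z) := by
  have := orbit_step (g := g) hf (g z) 1
  simpa [hg.inv] using this

theorem f_to_g [Finite V] {G : SimpleGraph V} {f g : Equiv.Perm V} (hf : MP G f) (hg : MP G g)
    (z : V) : ReflTransGen (St G g) (f z) (g z) := RT.tr hf hg (g_to_f hg hf z)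

theorem flower {G : SimpleGraph V} {f : Equiv.Perm V} (hf : MP G f) {a b : V}
    (h : TransGen (St G f) a b) : (∃ l, PL (St G f) a l b ∧ Simp f (a :: l)) ∨
      ∃ b', Bs G f b' ∧ ReflTransGen (St G f) a (f b') ∧ ReflTransGen (St G f) b' b := by
  induction h using TransGen.head_induction_on with
  | @single a h =>
    left
    refine ⟨[], h, by simp, ?_⟩
    intro x hx hx'
    simp only [List.mem_singleton] at hx hx'
    subst hx
    exact hf.ne _ hx'
  | @head a c h hcb ih =>
    rcases ih with ⟨l, hl, hn⟩ | ⟨b', h1, h2, h3⟩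
    · have hp : PL (St G f) a (c :: l) b := ⟨h, hl⟩
      by_cases ha : a ∈ c :: l
      · obtain ⟨s, t, hst⟩ := List.append_of_mem ha
        rw [hst] at hn hp
        exact Or.inl ⟨t, (PL_append.1 hp).2, hn.sub (List.sublist_append_right _ _)⟩
      · by_cases hfa : f a ∈ c :: l
        · obtain ⟨s, t, hst⟩ := List.append_of_mem hfa
          rw [hst] at hn hp ha
          right
          obtain ⟨hp1, hp2⟩ := PL_append.1 hp
          refine ⟨f a, ⟨s, by rwa [hf.inv], ?_⟩, by rw [hf.inv], (PL_trans hp2).to_reflTransGen⟩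
          rw [hf.inv]
          have hfs : f a ∉ s := fun h => by
            have := hn.1
            rw [List.nodup_append] at this
            exact this.2.2 _ h _ (by simp) rfl
          have hs : Simp f s := hn.sub (List.sublist_append_left _ _)
          have has : a ∉ s := fun h => ha (by simp [h])
          refine ⟨List.nodup_cons.2 ⟨has, hs.1⟩, ?_⟩
          intro x hx hx'
          rcases List.mem_cons.1 hx with rfl | hx
          · rcases List.mem_cons.1 hx' with h | h
            · exact hf.ne _ h
            · exact hfs h
          · rcases List.mem_cons.1 hx' with h | h
            · apply hfs; rw [← h, hf.inv]; exact hx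
            · exact hs.2 x hx h
        · left
          refine ⟨c :: l, hp, List.nodup_cons.2 ⟨ha, hn.1⟩, ?_⟩
          intro x hx hx'
          rcases List.mem_cons.1 hx with rfl | hx
          · rcases List.mem_cons.1 hx' with h | h
            · exact hf.ne _ h
            · exact hfa h
          · rcases List.mem_cons.1 hx' with h | h
            · apply hfa; rw [← h, hf.inv]; exact hx
            · exact hn.2 x hx h
    · exact Or.inr ⟨b', h1, ReflTransGen.head h h2, h3⟩

theorem selfdual_base {G : SimpleGraph V} {f : Equiv.Perm V} (hf : MP G f) {a : V}
    (h : TransGen (St G f) a (f a)) :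
    ∃ b', Bs G f b' ∧ ReflTransGen (St G f) a (f b') ∧ ReflTransGen (St G f) b' (f a) := by
  rcases flower hf h with ⟨l, hl, hs⟩ | h
  · exact ⟨f a, ⟨l, by rwa [hf.inv], by rwa [hf.inv]⟩, by rw [hf.inv], .refl⟩
  · exact h

/-- dihedral orbits -/
theorem dihedral {h g : Equiv.Perm V} (hh : ∀ x, h (h x) = x) (hg : ∀ x, g (g x) = x)
    (hh' : ∀ x, h x ≠ x) (hg' : ∀ x, g x ≠ x) : ∀ (n : ℕ) (x : V), ((h * g) ^ n) x ≠ g x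
  | 0, x => by simpa using (hg' x).symm
  | 1, x => by simpa using hh' (g x)
  | n + 2, x => by
    intro e
    rw [pow_succ', pow_succ] at e
    have e2 : ((h * g) ^ n) ((h * g) x) = g ((h * g) x) := by
      have := congrArg (fun y => g (h y)) e
      simpa [hh, hg] using this
    exact dihedral hh hg hh' hg' n _ e2

theorem PL_range {R : V → V → Prop} (q : ℕ → V) {a : V} (h0 : R a (q 0)) (n : ℕ) :
    ∀ b, (∀ k < n, R (q k) (q (k + 1))) → R (q n) b →
    PL R a ((List.range (n + 1)).map q) b := by
  induction n with
  | zero => intro b _ hb; exact ⟨h0, hb⟩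
  | succ n ih =>
    intro b hk hb
    rw [List.range_succ, List.map_append]
    exact PL_append.2 ⟨ih _ (fun k hk' => hk k (by omega)) (hk n (by omega)), hb⟩

end abs


section abs2
variable {V : Type*}

theorem PL_getElem {R : V → V → Prop} {b : V} : ∀ {l : List V} {a : V}, PL R a l b →
    ∀ k (hk : k + 1 < l.length), R (l[k]'(by omega)) l[k + 1]
  | [], _, _ => by intro k hk; simp at hk
  | [c], _, _ => by intro k hk; simp at hk
  | c :: d :: l, a, h => by
    intro k hk
    cases k with
    | zero => exact h.2.1
    | succ k => exact PL_getElem (l := d :: l) h.2 k (by simpa using hk)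

theorem PL_last {R : V → V → Prop} {b : V} : ∀ {l : List V} {a : V}, PL R a l b →
    ∀ (hl : l ≠ []), R (l.getLast hl) b
  | [], _, _ => by intro hl; simp at hl
  | [c], _, h => fun _ => h.2
  | c :: d :: l, a, h => by
    intro hl
    rw [List.getLast_cons (by simp)]
    exact PL_last (l := d :: l) h.2 (by simp)

theorem transfer [Finite V] [DecidableEq V] {G : SimpleGraph V} {f g : Equiv.Perm V}
    (hf : MP G f) (hg : MP G g)
    (U : V → Prop) (hUf : ∀ x, U x → U (f x)) (hUg : ∀ x, U x → U (g x))
    {x y : V} (hy : ¬ U y) (hx : ¬ U (g (f x))) (hxy : y ≠ g (f x)) (t : List V)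
    (ht : PL (St G f) x t y) (hs : Simp f t) (htU : ∀ z ∈ t, U z) :
    ∃ t', PL (St G g) (g (f x)) t' y ∧ Simp g t' ∧ ∀ z ∈ t', U z := by
  rcases t with _ | ⟨i, t0⟩
  · exact ⟨[], ⟨by rw [hg.inv]; exact ht.1, hxy⟩, by simp [Simp], by simp⟩
  set t := i :: t0 with htdef
  have htne : t ≠ [] := by simp [htdef]
  set jl := t.getLast htne with hjl
  have hlast : G.Adj (f jl) y := (PL_last ht htne).1
  have hfirst : G.Adj (f x) i := ht.1.1
  set c := t.formPerm with hc
  have hcU : ∀ z, U z → U (c z) := by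
    intro z hz
    by_cases h : z ∈ t
    · exact htU _ (List.formPerm_apply_mem_of_mem h)
    · rw [hc, List.formPerm_apply_of_notMem h]; exact hz
  have hcadj : ∀ z ∈ t, G.Adj (f z) (c z) ∨ (c z = i ∧ z = jl) := by
    intro z hz
    obtain ⟨k, hk, rfl⟩ := List.getElem_of_mem hz
    by_cases hk' : k + 1 < t.length
    · left
      rw [hc, List.formPerm_apply_lt_getElem _ hs.1 _ hk']
      exact (PL_getElem ht k hk').1
    · right
      have hk2 : k = t.length - 1 := by omega
      constructor
      · rw [hc, List.formPerm_apply_getElem _ hs.1]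
        have : (k + 1) % t.length = 0 := by
          rw [show k + 1 = t.length by omega]; simp
        simp only [this]; rfl
      · rw [hjl, List.getLast_eq_getElem]; simp [hk2]
  set h : Equiv.Perm V := c * f * c⁻¹ with hh
  have hcf : ∀ z, h (c z) = c (f z) := by intro z; simp [hh]
  have hinv : ∀ z, h (h z) = z := by
    intro z
    obtain ⟨w, rfl⟩ := c.surjective z
    rw [hcf, hcf, hf.inv]
  have hne : ∀ z, h z ≠ z := by
    intro z
    obtain ⟨w, rfl⟩ := c.surjective z
    rw [hcf]
    exact fun e => hf.ne w (c.injective e)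
  set j := f jl with hj
  have hH : ∀ z, G.Adj z (h z) ∨ (z = i ∧ h z = j) ∨ (z = j ∧ h z = i) := by
    intro z
    obtain ⟨w, rfl⟩ := c.surjective z
    rw [hcf]
    by_cases hw : w ∈ t
    · have : c (f w) = f w := List.formPerm_apply_of_notMem (hs.2 w hw)
      rw [this]
      rcases hcadj w hw with h1 | ⟨h1, h2⟩
      · exact Or.inl h1.symm
      · exact Or.inr (Or.inl ⟨h1, by rw [h2]⟩)
    · have hcw : c w = w := List.formPerm_apply_of_notMem hw
      rw [hcw]
      by_cases hfw : f w ∈ t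
      · rcases hcadj _ hfw with h1 | ⟨h1, h2⟩
        · left; rwa [hf.inv] at h1
        · exact Or.inr (Or.inr ⟨by rw [hj, ← h2, hf.inv], h1⟩)
      · have : c (f w) = f w := List.formPerm_apply_of_notMem hfw
        rw [this]; exact Or.inl (hf.adj w)
  have hhi : h i = j := by
    have hjm : jl ∈ t := List.getLast_mem htne
    have hci : c jl = i := by
      rw [hc, hjl, List.getLast_eq_getElem, List.formPerm_apply_getElem _ hs.1]
      have : (t.length - 1 + 1) % t.length = 0 := by
        rw [show t.length - 1 + 1 = t.length by simp [htdef]]; simp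
      simp only [this]; rfl
    rw [← hci, hcf]
    exact List.formPerm_apply_of_notMem (hs.2 _ hjm)
  have hhU : ∀ z, U z → U (h z) := by
    intro z hz
    have hcinvU : U (c⁻¹ z) := by
      by_cases hm : c⁻¹ z ∈ t
      · exact htU _ hm
      · have : c (c⁻¹ z) = c⁻¹ z := List.formPerm_apply_of_notMem hm
        rw [← this]; simpa using hz
    exact hcU _ (hUf _ hcinvU)
  set p := h * g with hp
  set q : ℕ → V := fun n => (p ^ n) i with hq
  have hqs : ∀ n, q (n + 1) = h (g (q n)) := by intro n; simp [hq, pow_succ', hp]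
  have hqU : ∀ n, U (q n) := by
    intro n
    induction n with
    | zero => exact htU _ (by simp [hq, htdef])
    | succ n ih => rw [hqs]; exact hhU _ (hUg _ ih)
  have hex : ∃ n, q (n + 1) = i := by
    refine ⟨orderOf p - 1, ?_⟩
    have := orderOf_pos p
    simp only [hq]
    rw [Nat.sub_add_cancel this, pow_orderOf_eq_one]; rfl
  classical
  let n := Nat.find hex
  have hn : q (n + 1) = i := Nat.find_spec hex
  have hmin : ∀ k < n, q (k + 1) ≠ i := fun k hk => Nat.find_min hex hk
  have hqadd : ∀ a d, q (a + d) = (p ^ d) (q a) := by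
    intro a d; simp only [hq]; rw [add_comm, pow_add]; rfl
  have hqinj : ∀ a d, q (a + d) = q a → q d = i := by
    intro a d e
    have : (p ^ a) (q d) = (p ^ a) i := by
      rw [← hqadd d a, add_comm]; exact e
    exact (p ^ a).injective this
  have hcomp : ∀ a b, g (q a) ≠ q b := by
    intro a b e
    rcases le_total a b with hab | hab
    · obtain ⟨d, rfl⟩ := Nat.exists_eq_add_of_le hab
      rw [hqadd] at e
      exact dihedral hinv hg.inv hne hg.ne d _ e.symm
    · obtain ⟨d, rfl⟩ := Nat.exists_eq_add_of_le hab
      have e' : q (b + d) = g (q b) := by rw [← e, hg.inv]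
      rw [hqadd] at e'
      exact dihedral hinv hg.inv hne hg.ne d _ e'
  have hgn : g (q n) = j := by
    rw [hqs] at hn
    rw [← hhi, ← hn, hinv]
  refine ⟨(List.range (n + 1)).map q, ?_, ⟨?_, ?_⟩, ?_⟩
  · apply PL_range
    · have : q 0 = i := by simp [hq]
      rw [this]
      refine ⟨by rw [hg.inv]; exact hfirst, ?_⟩
      intro e
      exact hx (e ▸ this ▸ hqU 0)
    · intro k hk
      refine ⟨?_, ?_⟩
      · rw [hqs]
        rcases hH (g (q k)) with h1 | ⟨h1, _⟩ | ⟨_, h1⟩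
        · exact h1
        · exact absurd (h1.trans (by simp [hq] : i = q 0)) (hcomp k 0)
        · exact absurd ((hqs k).trans h1) (hmin k hk)
      · intro e
        have := hqinj k 1 e
        exact hmin 0 (by omega) this
    · exact ⟨by rw [hgn]; exact hlast, fun e => hy (e ▸ hqU n)⟩
  · apply List.Nodup.map_on _ List.nodup_range
    have key : ∀ a b, a < b → b < n + 1 → q a ≠ q b := by
      intro a b hab hb e
      obtain ⟨d, rfl⟩ := Nat.exists_eq_add_of_lt hab
      exact hmin d (by omega) (hqinj a (d + 1) e.symm)
    intro a ha b hb e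
    simp only [List.mem_range] at ha hb
    rcases lt_trichotomy a b with h1 | h1 | h1
    · exact absurd e (key a b h1 hb)
    · exact h1
    · exact absurd e.symm (key b a h1 ha)
  · intro z hz hz'
    obtain ⟨a, _, rfl⟩ := List.mem_map.1 hz
    obtain ⟨b, _, e⟩ := List.mem_map.1 hz'
    exact hcomp a b e.symm
  · intro z hz
    obtain ⟨a, _, rfl⟩ := List.mem_map.1 hz
    exact hqU a

/-- split at the last element satisfying P -/
theorem split_last (P : V → Prop) : ∀ (l : List V), (∃ x ∈ l, P x) →
    ∃ s x t, l = s ++ x :: t ∧ P x ∧ ∀ z ∈ t, ¬ P z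
  | [], h => by simp at h
  | a :: l, h => by
    by_cases h' : ∃ x ∈ l, P x
    · obtain ⟨s, x, t, rfl, h1, h2⟩ := split_last P l h'
      exact ⟨a :: s, x, t, rfl, h1, h2⟩
    · push Not at h'
      obtain ⟨x, hx, hP⟩ := h
      rcases List.mem_cons.1 hx with rfl | hx
      · exact ⟨[], x, l, rfl, hP, h'⟩
      · exact absurd hP (h' x hx)

theorem split_first (P : V → Prop) : ∀ (l : List V), (∃ x ∈ l, P x) →
    ∃ s x t, l = s ++ x :: t ∧ P x ∧ ∀ z ∈ s, ¬ P z := by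
  intro l h
  obtain ⟨s, x, t, h1, h2, h3⟩ := split_last P l.reverse (by simpa using h)
  refine ⟨t.reverse, x, s.reverse, ?_, h2, by simpa using h3⟩
  rw [← List.reverse_reverse l, h1]; simp

theorem base_transfer [Finite V] {G : SimpleGraph V} {f g : Equiv.Perm V}
    (hf : MP G f) (hg : MP G g) {b : V} (hb : Bs G f b) :
    ∃ b', Bs G g b' ∧ ReflTransGen (St G g) b b' ∧ ReflTransGen (St G g) b' b := by
  classical
  obtain ⟨l, hl, hsl⟩ := hb
  have hfb : ReflTransGen (St G g) (f b) b := (TG.tr hf hg (PL_trans hl)).to_reflTransGen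
  by_cases hsd : ReflTransGen (St G g) b (f b)
  · have h1 := TG_of_RT_ne (hsd.trans (f_to_g hf hg b)) (hg.ne b).symm
    obtain ⟨b', h2, h3, h4⟩ := selfdual_base hg h1
    refine ⟨b', h2, ?_, (h4.trans (g_to_f hf hg b)).trans hfb⟩
    obtain ⟨l', hl', _⟩ := h2
    exact h3.trans (PL_trans hl').to_reflTransGen
  let K : V → Prop := fun z => ReflTransGen (St G g) z (f b) ∧ ReflTransGen (St G g) (f b) z
  let K' : V → Prop := fun z => ReflTransGen (St G g) z b ∧ ReflTransGen (St G g) b z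
  have hdisj : ∀ z, K z → K' z → False := fun z h1 h2 => hsd (h2.2.trans h1.1)
  have cf : ∀ {x y}, ReflTransGen (St G g) x y → ReflTransGen (St G g) (f y) (f x) := by
    intro x y h
    exact RT.tr hf hg (RT.contra hf (RT.tr hg hf h))
  have Kf : ∀ z, K z → K' (f z) := by
    intro z hz
    have h1 := cf hz.1
    have h2 := cf hz.2
    rw [hf.inv] at h1 h2
    exact ⟨h2, h1⟩
  have K'f : ∀ z, K' z → K (f z) := fun z hz => ⟨cf hz.2, cf hz.1⟩
  have Kg : ∀ z, K z → K' (g z) := fun z hz =>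
    ⟨(g_to_f hf hg z).trans (Kf z hz).1, (Kf z hz).2.trans (f_to_g hf hg z)⟩
  have K'g : ∀ z, K' z → K (g z) := fun z hz =>
    ⟨(g_to_f hf hg z).trans (K'f z hz).1, (K'f z hz).2.trans (f_to_g hf hg z)⟩
  let U : V → Prop := fun z => ¬ K z ∧ ¬ K' z
  have hUf : ∀ x, U x → U (f x) := fun x hx =>
    ⟨fun h => hx.2 (by simpa [hf.inv] using Kf _ h), fun h => hx.1 (by simpa [hf.inv] using K'f _ h)⟩
  have hUg : ∀ x, U x → U (g x) := fun x hx =>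
    ⟨fun h => hx.2 (by simpa [hg.inv] using Kg _ h), fun h => hx.1 (by simpa [hg.inv] using K'g _ h)⟩
  have hKb : K (f b) := ⟨.refl, .refl⟩
  have hK'b : K' b := ⟨.refl, .refl⟩
  obtain ⟨s, x, t, hst, hKx, hKt⟩ := split_last K (f b :: l) ⟨_, by simp, hKb⟩
  have hxt : PL (St G f) x t b := by
    rcases s with _ | ⟨s0, s⟩
    · simp only [List.nil_append, List.cons.injEq] at hst
      rw [← hst.1, ← hst.2]; exact hl
    · simp only [List.cons_append, List.cons.injEq] at hst
      rw [hst.2] at hl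
      exact (PL_append.1 hl).2
  have hst' : Simp f t := hsl.sub (by rw [hst]; simp)
  obtain ⟨t1, y, hPy, hK'y, ht1, hsub⟩ : ∃ t1 y, PL (St G f) x t1 y ∧ K' y ∧
      (∀ z ∈ t1, ¬ K' z) ∧ t1.Sublist t := by
    by_cases h : ∃ z ∈ t, K' z
    · obtain ⟨t1, y, t2, rfl, h1, h2⟩ := split_first K' t h
      exact ⟨t1, y, (PL_append.1 hxt).1, h1, h2, List.sublist_append_left _ _⟩
    · push Not at h
      exact ⟨t, b, hxt, hK'b, h, List.Sublist.refl _⟩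
  have hKX : K (g (f x)) := K'g _ (Kf _ hKx)
  obtain ⟨t', hp', hs', hU'⟩ := transfer hf hg U hUf hUg (x := x) (y := y)
    (fun h => h.2 hK'y) (fun h => h.1 hKX) (fun e => hdisj _ (e ▸ hKX) hK'y) t1 hPy
    (hst'.sub hsub) (fun z hz => ⟨hKt z (hsub.subset hz), ht1 z hz⟩)
  refine ⟨y, ?_, hK'y.2, hK'y.1⟩
  have hKy : K (g y) := K'g _ hK'y
  have comb : ∀ L : List V, L.Nodup → (∀ z ∈ L, K z) → Simp g (L ++ t') := by
    intro L hL hK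
    refine ⟨List.nodup_append.2 ⟨hL, hs'.1, ?_⟩, ?_⟩
    · rintro z hz w hw rfl; exact (hU' _ hw).1 (hK _ hz)
    · intro z hz hz'
      rcases List.mem_append.1 hz with hz | hz
      · have h1 := Kg _ (hK _ hz)
        rcases List.mem_append.1 hz' with hz' | hz'
        · exact hdisj _ (hK _ hz') h1
        · exact (hU' _ hz').2 h1
      · have h1 := hUg _ (hU' _ hz)
        rcases List.mem_append.1 hz' with hz' | hz'
        · exact h1.1 (hK _ hz')
        · exact hs'.2 _ hz hz'
  by_cases e : g y = g (f x)
  · refine ⟨t', by rw [e]; exact hp', ?_⟩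
    exact comb [g y] (by simp) (by simpa using hKy)
  · obtain ⟨l', hl', hn'⟩ := exists_PL_nodup (TG_of_RT_ne (hKy.1.trans hKX.2) e)
    obtain ⟨l'', hl'', hn''⟩ : ∃ l'', PL (St G g) (g y) l'' (g (f x)) ∧
        (g y :: l'' ++ [g (f x)]).Nodup := by
      by_cases hm : g (f x) ∈ l'
      · obtain ⟨s1, s2, rfl, hns⟩ := List.eq_append_cons_of_mem hm
        refine ⟨s1, (PL_append.1 hl').1, hn'.sublist ?_⟩
        simp
      · refine ⟨l', hl', ?_⟩
        rw [List.nodup_append]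
        refine ⟨hn', by simp, ?_⟩
        rintro z hz w hw rfl
        simp only [List.mem_singleton] at hw
        subst hw
        rcases List.mem_cons.1 hz with h | h
        · exact e h.symm
        · exact hm h
    refine ⟨l'' ++ g (f x) :: t', PL_append.2 ⟨hl'', hp'⟩, ?_⟩
    have := comb (g y :: l'' ++ [g (f x)]) hn'' (by
      intro z hz
      simp only [List.cons_append, List.mem_cons, List.mem_append, List.not_mem_nil, or_false] at hz
      rcases hz with rfl | hz | rfl
      · exact hKy
      · obtain ⟨h1, h2⟩ := PL_mem hl'' hz
        exact ⟨h2.to_reflTransGen.trans hKX.1, hKy.2.trans h1.to_reflTransGen⟩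
      · exact hKX)
    simpa using this

def Cond (G : SimpleGraph V) (f : Equiv.Perm V) (v : V) : Prop :=
  Bs G f v ∨ ∃ b₁ b₂, Bs G f b₁ ∧ Bs G f b₂ ∧ TransGen (St G f) (f b₁) v ∧ TransGen (St G f) v b₂

theorem cond_transfer [Finite V] {G : SimpleGraph V} {f g : Equiv.Perm V}
    (hf : MP G f) (hg : MP G g) {v : V} (h : Cond G f v) : Cond G g v := by
  rcases h with h | ⟨b1, b2, h1, h2, h3, h4⟩
  · obtain ⟨b', hb', h1, h2⟩ := base_transfer hf hg h
    by_cases e : v = b'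
    · exact Or.inl (e ▸ hb')
    · have := TG_of_RT_ne h1 e
      obtain ⟨l, hl, _⟩ := id hb'
      exact Or.inr ⟨b', b', hb', hb', TransGen.trans_left (PL_trans hl) h2, this⟩
  · obtain ⟨b1', hb1', h11, h12⟩ := base_transfer hf hg h1
    obtain ⟨b2', hb2', h21, h22⟩ := base_transfer hf hg h2
    refine Or.inr ⟨b1', b2', hb1', hb2', ?_, TransGen.trans_left (TG.tr hf hg h4) h21⟩
    exact TransGen.trans_right ((RT.contra hg h11).trans (g_to_f hf hg b1)) (TG.tr hf hg h3)

theorem cond_selfdual {G : SimpleGraph V} {f : Equiv.Perm V}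
    (hf : MP G f) {v : V} (h1 : ReflTransGen (St G f) v (f v))
    (h2 : ReflTransGen (St G f) (f v) v) : Cond G f v := by
  obtain ⟨b, hb, h3, h4⟩ := selfdual_base hf (TG_of_RT_ne h1 (hf.ne v).symm)
  obtain ⟨l, hl, _⟩ := id hb
  right
  refine ⟨b, b, hb, hb, ?_, TransGen.trans_right h3 (PL_trans hl)⟩
  exact TransGen.trans_left (PL_trans hl) (h4.trans h2)

end abs2

theorem covered_card {G : SimpleGraph V} {M : Finset (Sym2 V)} (hM : IsMatching' G M) :
    (M.biUnion (fun e => e.toFinset)).card = 2 * M.card := by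
  rw [Finset.card_biUnion]
  · rw [Finset.sum_const_nat (m := 2), mul_comm]
    intro e he
    exact Sym2.card_toFinset_of_not_isDiag e (G.not_isDiag_of_mem_edgeSet (hM.1 e he))
  · intro e he e' he' hne
    change Disjoint e.toFinset e'.toFinset
    rw [Finset.disjoint_left]
    intro x hx hx'
    rw [Sym2.mem_toFinset] at hx hx'
    exact hM.2 e he e' he' hne x hx hx'

theorem max_perfect {G : SimpleGraph V} {M N : Finset (Sym2 V)} (hM : IsPerfectMatching' G M)
    (hN : IsMaximumMatching' G N) : IsPerfectMatching' G N := by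
  refine ⟨hN.1, ?_⟩
  have h1 := covered_card hM.1
  have h2 := covered_card hN.1
  have h3 := hN.2 M hM.1
  have h4 : M.biUnion (fun e => e.toFinset) = Finset.univ := by
    ext v
    obtain ⟨e, he, hv⟩ := hM.2 v
    simp only [Finset.mem_biUnion, Sym2.mem_toFinset, Finset.mem_univ, iff_true]
    exact ⟨e, he, hv⟩
  rw [h4, Finset.card_univ] at h1
  have h5 : N.biUnion (fun e => e.toFinset) = Finset.univ := by
    rw [← Finset.card_eq_iff_eq_univ]
    apply le_antisymm (Finset.card_le_univ _)
    omega
  intro v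
  have h6 : v ∈ N.biUnion (fun e => e.toFinset) := by rw [h5]; simp
  simpa only [Finset.mem_biUnion, Sym2.mem_toFinset] using h6

theorem exists_partner {G : SimpleGraph V} {M : Finset (Sym2 V)} (hM : IsPerfectMatching' G M) :
    ∃ f : Equiv.Perm V, MP G f ∧ ∀ x y, s(x, y) ∈ M ↔ f x = y := by
  have h : ∀ v, ∃ y, s(v, y) ∈ M := by
    intro v
    obtain ⟨e, he, hv⟩ := hM.2 v
    obtain ⟨y, rfl⟩ := Sym2.mem_iff_exists.1 hv
    exact ⟨y, he⟩
  choose f hf using h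
  have huniq : ∀ x y, s(x, y) ∈ M ↔ f x = y := by
    intro x y
    constructor
    · intro hxy
      by_contra hne
      refine hM.1.2 _ (hf x) _ hxy ?_ x (by simp) (by simp)
      intro e
      exact hne (Sym2.congr_right.1 e)
    · rintro rfl; exact hf x
  have hinv : Function.Involutive f := by
    intro x
    rw [← huniq, Sym2.eq_swap]; exact hf x
  exact ⟨hinv.toPerm, ⟨hinv, fun x => hM.1.1 _ (hf x)⟩, huniq⟩

theorem nn_walk {G : SimpleGraph V} {M : Finset (Sym2 V)} {f : Equiv.Perm V} (hf : MP G f)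
    (hfM : ∀ x y, s(x, y) ∈ M ↔ f x = y) : ∀ {a b : V} (w : G.Walk a b),
    w.edges.IsChain (fun e e' => (e ∈ M ↔ e' ∉ M)) → (∀ e, w.edges.head? = some e → e ∉ M) →
    Odd w.length → ∃ l, PL (St G f) (f a) l b ∧ w.support = a :: Fl f l ++ [b]
  | _, _, .nil => by intro _ _ h; simp at h
  | a, b, .cons h .nil => by
    intro _ h2 _
    refine ⟨[], ⟨by rw [hf.inv]; exact h, ?_⟩, by simp [Fl]⟩
    intro e
    exact h2 _ (by simp) ((hfM _ _).2 e.symm)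
  | a, b, .cons (v := x) h1 (.cons (v := x') h2 w) => by
    intro hc hh ho
    have hn : s(a, x) ∉ M := hh _ (by simp)
    simp only [Walk.edges_cons, List.isChain_cons_cons] at hc
    have hm : s(x, x') ∈ M := by
      by_contra hm; exact hn (hc.1.2 hm)
    have hx' : f x = x' := (hfM _ _).1 hm
    have ih := nn_walk hf hfM w
    subst hx'
    have hc2 := hc.2
    rw [List.isChain_cons] at hc2
    obtain ⟨l, hl, hs⟩ := ih hc2.2
      (fun e he => (hc2.1 e he).1 hm) (by
        simp only [Walk.length_cons] at ho
        rw [Nat.odd_iff] at ho ⊢; omega)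
    rw [hf.inv] at hl
    refine ⟨x :: l, ⟨⟨by rw [hf.inv]; exact h1, fun e => hn ((hfM _ _).2 e.symm)⟩, hl⟩, ?_⟩
    rw [Walk.support_cons, Walk.support_cons, hs]
    simp [Fl]

theorem mm_walk {G : SimpleGraph V} {M : Finset (Sym2 V)} {f : Equiv.Perm V} (hf : MP G f)
    (hfM : ∀ x y, s(x, y) ∈ M ↔ f x = y) : ∀ {a b : V} (w : G.Walk a b),
    w.edges.IsChain (fun e e' => (e ∈ M ↔ e' ∉ M)) → (∀ e, w.edges.head? = some e → e ∈ M) →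
    Odd w.length → ReflTransGen (St G f) a (f b) ∧ ∀ v ∈ w.support,
      (ReflTransGen (St G f) a v ∧ ReflTransGen (St G f) v (f b)) ∨
      (ReflTransGen (St G f) a (f v) ∧ ReflTransGen (St G f) (f v) (f b))
  | _, _, .nil => by intro _ _ h; simp at h
  | a, b, .cons h .nil => by
    intro _ h2 _
    have : f a = b := (hfM _ _).1 (h2 _ (by simp))
    subst this
    rw [hf.inv]
    refine ⟨.refl, ?_⟩
    intro v hv
    simp only [Walk.support_cons, Walk.support_nil, List.mem_cons, List.not_mem_nil, or_false] at hv
    rcases hv with rfl | rfl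
    · exact Or.inl ⟨.refl, .refl⟩
    · right; rw [hf.inv]; exact ⟨.refl, .refl⟩
  | a, b, .cons (v := x) h1 (.cons (v := x') h2 w) => by
    intro hc hh ho
    have hm : s(a, x) ∈ M := hh _ (by simp)
    simp only [Walk.edges_cons, List.isChain_cons_cons] at hc
    have hn : s(x, x') ∉ M := hc.1.1 hm
    have hx' : f a = x := (hfM _ _).1 hm
    subst hx'
    have hc2 := hc.2
    rw [List.isChain_cons] at hc2
    have hst : St G f a x' := ⟨h2, fun e => hn ((hfM _ _).2 (by rw [hf.inv]; exact e.symm))⟩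
    obtain ⟨hl, hs⟩ := mm_walk hf hfM w hc2.2
      (fun e he => by
        by_contra hne
        exact hn ((hc2.1 e he).2 hne)) (by
        simp only [Walk.length_cons] at ho
        rw [Nat.odd_iff] at ho ⊢; omega)
    refine ⟨.head hst hl, ?_⟩
    intro v hv
    simp only [Walk.support_cons, List.mem_cons] at hv
    rcases hv with rfl | rfl | hv
    · exact Or.inl ⟨.refl, .head hst hl⟩
    · right; rw [hf.inv]; exact ⟨.refl, .head hst hl⟩
    · rcases hs v hv with ⟨h3, h4⟩ | ⟨h3, h4⟩
      · exact Or.inl ⟨.head hst h3, h4⟩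
      · exact Or.inr ⟨.head hst h3, h4⟩

theorem list_count {α : Type*} (p : α → Prop) [DecidablePred p] : ∀ (l : List α),
    l.IsChain (fun a b => ¬ (p a ∧ p b)) → l ≠ [] → (∀ a, l.head? = some a → ¬ p a) →
    (∀ a, l.getLast? = some a → ¬ p a) →
    2 * l.countP (fun a => decide (p a)) + 1 ≤ l.length ∧
    (2 * l.countP (fun a => decide (p a)) + 1 = l.length → l.IsChain (fun a b => (p a ↔ ¬ p b)))
  | [], _, h, _, _ => absurd rfl h
  | [a], _, _, h1, _ => by
    have := h1 a rfl
    simp [this]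
  | a :: c :: l, hc, _, h1, h2 => by
    have ha := h1 a rfl
    rw [List.isChain_cons_cons] at hc
    by_cases hpc : p c
    · have hl : l ≠ [] := by
        rintro rfl
        exact h2 c (by simp) hpc
      have hc2 := hc.2
      rw [List.isChain_cons] at hc2
      obtain ⟨h3, h4⟩ := list_count p l hc2.2 hl (fun e he hp => hc2.1 e he ⟨hpc, hp⟩)
        (fun e he => h2 e (by
          rw [List.getLast?_cons, List.getLast?_cons, he]; rfl))
      simp only [List.countP_cons, ha, hpc, decide_true, decide_false, List.length_cons]
      refine ⟨by simp; omega, ?_⟩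
      intro e
      rw [List.isChain_cons_cons, List.isChain_cons]
      refine ⟨by tauto, ?_, h4 (by simp at e; omega)⟩
      intro d hd
      have := hc2.1 d hd
      tauto
    · obtain ⟨h3, _⟩ := list_count p (c :: l) hc.2 (by simp)
        (fun e he => by simp at he; exact he ▸ hpc)
        (fun e he => h2 e (by rw [List.getLast?_cons, he]; rfl))
      rw [List.countP_cons_of_neg (by simpa using ha)]
      rw [List.length_cons]
      exact ⟨by omega, fun e => by omega⟩

theorem trail_notboth {G : SimpleGraph V} {M : Finset (Sym2 V)} (hM : IsMatching' G M) :
    ∀ {a b : V} (w : G.Walk a b), w.edges.Nodup →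
    w.edges.IsChain (fun e e' => ¬ (e ∈ M ∧ e' ∈ M))
  | _, _, .nil, _ => by simp
  | _, _, .cons h .nil, _ => by simp
  | a, b, .cons (v := x) h1 (.cons (v := x') h2 w), hn => by
    rw [Walk.edges_cons] at hn
    have ih := trail_notboth hM (.cons h2 w) (List.nodup_cons.1 hn).2
    rw [Walk.edges_cons] at ih hn ⊢
    rw [Walk.edges_cons, List.isChain_cons_cons]
    refine ⟨?_, ih⟩
    rintro ⟨h3, h4⟩
    refine hM.2 _ h3 _ h4 ?_ x (by simp) (by simp)
    intro e
    rw [e] at hn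
    simp at hn

theorem head_mem {G : SimpleGraph V} {a b : V} (w : G.Walk a b) (e : Sym2 V)
    (h : w.edges.head? = some e) : a ∈ e := by
  cases w with
  | nil => simp at h
  | cons h' p => simp at h; subst h; simp

theorem last_mem {G : SimpleGraph V} {a b : V} (w : G.Walk a b) (e : Sym2 V)
    (h : w.edges.getLast? = some e) : b ∈ e := by
  apply head_mem w.reverse
  rw [Walk.edges_reverse, List.head?_reverse, h]

theorem mem_Fl {G : SimpleGraph V} {f : Equiv.Perm V} (hf : MP G f) {l : List V} (z : V) :
    z ∈ Fl f l ↔ z ∈ l ∨ f z ∈ l := by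
  simp only [Fl, List.mem_flatMap, List.mem_cons, List.not_mem_nil, or_false]
  constructor
  · rintro ⟨w, hw, rfl | rfl⟩
    · exact Or.inl hw
    · right; rwa [hf.inv]
  · rintro (h | h)
    · exact ⟨z, h, Or.inl rfl⟩
    · exact ⟨f z, h, Or.inr (hf.inv z).symm⟩

theorem blossom_base {G : SimpleGraph V} {M : Finset (Sym2 V)} (hM : IsMatching' G M)
    {f : Equiv.Perm V} (hf : MP G f) (hfM : ∀ x y, s(x, y) ∈ M ↔ f x = y) {b : V}
    {c : G.Walk b b} (hc : IsBlossom G M c) :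
    ∃ l, PL (St G f) (f b) l b ∧ Simp f (f b :: l) ∧ c.support = b :: Fl f l ++ [b] := by
  obtain ⟨h1, h2, h3, h4⟩ := hc
  have hne : c.edges ≠ [] := by
    intro e
    have := congrArg List.length e
    rw [Walk.length_edges] at this
    simp only [List.length_nil] at this
    rw [this] at h2; simp at h2
  have hh : ∀ e, c.edges.head? = some e → e ∉ M := fun e he hm =>
    h4 e (List.mem_of_mem_head? he) hm (head_mem c e he)
  have hl : ∀ e, c.edges.getLast? = some e → e ∉ M := fun e he hm =>
    h4 e (List.mem_of_getLast? he) hm (last_mem c e he)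
  have halt := (list_count (fun e => e ∈ M) c.edges
    (trail_notboth hM c h1.isTrail.edges_nodup) hne hh hl).2 (by rw [Walk.length_edges]; exact h3)
  obtain ⟨l, hPL, hs⟩ := nn_walk hf hfM c halt hh h2
  refine ⟨l, hPL, ?_, hs⟩
  have hnd := h1.support_nodup
  rw [hs] at hnd
  simp only [List.cons_append, List.tail_cons] at hnd
  rw [← Simp.fl hf]
  have hfl : Fl f (f b :: l) = f b :: b :: Fl f l := by simp [Fl, hf.inv]
  rw [hfl]
  have hb : b ∉ Fl f l := by
    intro h
    rw [List.nodup_append] at hnd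
    exact hnd.2.2 b h b (by simp) rfl
  have hfb : f b ∉ Fl f l := by
    intro h
    rw [mem_Fl hf, hf.inv] at h
    exact hb ((mem_Fl hf b).2 h.symm)
  rw [List.nodup_cons, List.nodup_cons, List.mem_cons, not_or]
  exact ⟨⟨hf.ne b, hfb⟩, hb, (List.nodup_append.1 hnd).1⟩

theorem build_walk {G : SimpleGraph V} {M : Finset (Sym2 V)} {f : Equiv.Perm V} (hf : MP G f)
    (hfM : ∀ x y, s(x, y) ∈ M ↔ f x = y) {b : V} : ∀ (l : List V) (a : V),
    PL (St G f) (f a) l b → ∃ w : G.Walk a b, w.support = a :: Fl f l ++ [b] ∧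
      w.edges.IsChain (fun e e' => (e ∈ M ↔ e' ∉ M)) ∧ (∀ e, w.edges.head? = some e → e ∉ M) ∧
      2 * (w.edges.countP (fun e => decide (e ∈ M))) + 1 = w.length
  | [], a, h => by
    have h1 : G.Adj a b := by have := h.1; rwa [hf.inv] at this
    have h2 : s(a, b) ∉ M := fun hm => h.2 ((hfM _ _).1 hm).symm
    refine ⟨.cons h1 .nil, by simp [Fl], by simp, ?_, by simp [h2]⟩
    intro e he
    simp at he; subst he; exact h2
  | x :: l, a, h => by
    have h1 : G.Adj a x := by have := h.1.1; rwa [hf.inv] at this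
    have h2 : s(a, x) ∉ M := fun hm => h.1.2 ((hfM _ _).1 hm).symm
    have h3 : s(x, f x) ∈ M := (hfM _ _).2 rfl
    obtain ⟨w, hs, hc, hh, hl⟩ := build_walk hf hfM l (f x) (by rw [hf.inv]; exact h.2)
    refine ⟨.cons h1 (.cons (hf.adj x) w), ?_, ?_, ?_, ?_⟩
    · rw [Walk.support_cons, Walk.support_cons, hs]; simp [Fl]
    · rw [Walk.edges_cons, Walk.edges_cons, List.isChain_cons_cons, List.isChain_cons]
      refine ⟨by tauto, ?_, hc⟩
      intro e he
      have := hh e he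
      tauto
    · intro e he
      simp at he; subst he; exact h2
    · simp only [Walk.edges_cons, Walk.length_cons, List.countP_cons, h2, h3]
      simp; omega

theorem base_blossom {G : SimpleGraph V} {M : Finset (Sym2 V)}
    {f : Equiv.Perm V} (hf : MP G f) (hfM : ∀ x y, s(x, y) ∈ M ↔ f x = y) {b : V}
    (hb : Bs G f b) : ∃ c : G.Walk b b, IsBlossom G M c ∧
      c.edges.IsChain (fun e e' => (e ∈ M ↔ e' ∉ M)) := by
  obtain ⟨l, hl, hsl⟩ := hb
  obtain ⟨w, hs, hc, hh, hlen⟩ := build_walk hf hfM l b hl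
  rw [← Simp.fl hf] at hsl
  have hfl : Fl f (f b :: l) = f b :: b :: Fl f l := by simp [Fl, hf.inv]
  rw [hfl, List.nodup_cons, List.nodup_cons, List.mem_cons, not_or] at hsl
  refine ⟨w, ⟨?_, ⟨_, hlen.symm⟩, hlen, ?_⟩, hc⟩
  · rw [Walk.isCycle_iff_isPath_tail_and_le_length]
    have hlen3 : 3 ≤ w.length := by
      have h1 := congrArg List.length hs
      rw [Walk.length_support] at h1
      rcases l with _ | ⟨x, l⟩
      · have h2 := hl.1
        rw [hf.inv] at h2
        exact absurd h2 (G.loopless.irrefl b)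
      · simp [Fl] at h1; omega
    refine ⟨?_, hlen3⟩
    rw [Walk.isPath_def, Walk.support_tail_of_not_nil, hs]
    · simp only [List.cons_append, List.tail_cons]
      rw [List.nodup_append]
      refine ⟨hsl.2.2, by simp, ?_⟩
      rintro x hx y hy rfl
      simp only [List.mem_singleton] at hy
      subst hy
      exact hsl.2.1 hx
    · intro hn
      rw [Walk.nil_iff_length_eq] at hn
      omega
  · intro e he hm hbe
    obtain ⟨y, rfl⟩ := Sym2.mem_iff_exists.1 hbe
    have hy : f b = y := (hfM _ _).1 hm
    subst hy
    have := w.snd_mem_support_of_mem_edges he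
    rw [hs] at this
    simp only [List.cons_append, List.mem_cons, List.mem_append, List.not_mem_nil, or_false] at this
    have h2 := hf.ne b
    have h3 := hsl.1.2
    tauto

theorem cond_of_nn {G : SimpleGraph V} {f : Equiv.Perm V} (hf : MP G f) {b₁ b₂ v : V}
    {l : List V} (h1 : Bs G f b₁) (h2 : Bs G f b₂) (hl : PL (St G f) (f b₁) l b₂)
    (hv : v ∈ b₁ :: Fl f l ++ [b₂]) : Cond G f v := by
  simp only [List.cons_append, List.mem_cons, List.mem_append, List.not_mem_nil, or_false] at hv
  rcases hv with rfl | hv | rfl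
  · exact Or.inl h1
  · rw [mem_Fl hf] at hv
    rcases hv with hv | hv
    · obtain ⟨h3, h4⟩ := PL_mem hl hv
      exact Or.inr ⟨b₁, b₂, h1, h2, h3, h4⟩
    · obtain ⟨h3, h4⟩ := PL_mem hl hv
      have h3' := TG.contra hf h3
      have h4' := TG.contra hf h4
      rw [hf.inv] at h3' h4'
      rw [hf.inv] at h3'
      exact Or.inr ⟨b₂, b₁, h2, h1, h4', h3'⟩
  · exact Or.inl h2

theorem cond_of_mm {G : SimpleGraph V} {f : Equiv.Perm V} (hf : MP G f) {b₁ b₂ v : V}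
    (h1 : Bs G f b₁) (h2 : Bs G f b₂) (h3 : ReflTransGen (St G f) b₁ v)
    (h4 : ReflTransGen (St G f) v (f b₂)) : 
    ReflTransGen (St G f) v (f v) ∧ ReflTransGen (St G f) (f v) v := by
  obtain ⟨l1, hl1, _⟩ := h1
  obtain ⟨l2, hl2, _⟩ := h2
  have h3' := RT.contra hf h3
  have h4' := RT.contra hf h4
  rw [hf.inv] at h4'
  exact ⟨(h4.trans (PL_trans hl2).to_reflTransGen).trans h4',
    (h3'.trans (PL_trans hl1).to_reflTransGen).trans h3⟩

theorem cond_of_inJposy {G : SimpleGraph V} {M : Finset (Sym2 V)} (hM : IsMatching' G M)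
    {f : Equiv.Perm V} (hf : MP G f) (hfM : ∀ x y, s(x, y) ∈ M ↔ f x = y) {v : V}
    (h : InJposy G M v) : Cond G f v := by
  obtain ⟨J, hv⟩ := h
  obtain ⟨l1, hl1, hs1, hsup1⟩ := blossom_base hM hf hfM J.blossom₁
  obtain ⟨l2, hl2, hs2, hsup2⟩ := blossom_base hM hf hfM J.blossom₂
  have hb1 : Bs G f J.b₁ := ⟨l1, hl1, hs1⟩
  have hb2 : Bs G f J.b₂ := ⟨l2, hl2, hs2⟩
  rcases hv with hv | hv | hv
  · rw [hsup1] at hv; exact cond_of_nn hf hb1 hb1 hl1 hv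
  · rw [hsup2] at hv; exact cond_of_nn hf hb2 hb2 hl2 hv
  · have halt : J.walk.edges.IsChain (fun e e' => (e ∈ M ↔ e' ∉ M)) := J.alt
    by_cases hh : ∀ e, J.walk.edges.head? = some e → e ∉ M
    · obtain ⟨l, hl, hs⟩ := nn_walk hf hfM J.walk halt hh J.odd
      rw [hs] at hv
      exact cond_of_nn hf hb1 hb2 hl hv
    · push Not at hh
      obtain ⟨e, he, hm⟩ := hh
      have hh' : ∀ e, J.walk.edges.head? = some e → e ∈ M := by
        intro e' he'
        rw [he] at he'
        cases he'
        exact hm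
      rcases (mm_walk hf hfM J.walk halt hh' J.odd).2 v hv with ⟨h3, h4⟩ | ⟨h3, h4⟩
      · obtain ⟨h5, h6⟩ := cond_of_mm hf hb1 hb2 h3 h4
        exact cond_selfdual hf h5 h6
      · obtain ⟨h5, h6⟩ := cond_of_mm hf hb1 hb2 h3 h4
        rw [hf.inv] at h5 h6
        exact cond_selfdual hf h6 h5

theorem inJposy_of_cond {G : SimpleGraph V} {M : Finset (Sym2 V)}
    {f : Equiv.Perm V} (hf : MP G f) (hfM : ∀ x y, s(x, y) ∈ M ↔ f x = y) {v : V}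
    (h : Cond G f v) : InJposy G M v := by
  rcases h with h | ⟨b1, b2, h1, h2, h3, h4⟩
  · obtain ⟨c, hc, ha⟩ := base_blossom hf hfM h
    exact ⟨⟨v, v, c, c, c, hc, hc, hc.2.1, ha⟩, Or.inl c.start_mem_support⟩
  · obtain ⟨c1, hc1, _⟩ := base_blossom hf hfM h1
    obtain ⟨c2, hc2, _⟩ := base_blossom hf hfM h2
    obtain ⟨l, hl⟩ := exists_PL h3
    obtain ⟨l', hl'⟩ := exists_PL h4
    obtain ⟨w, hs, ha, _, hlen⟩ := build_walk hf hfM (l ++ v :: l') b1 (PL_append.2 ⟨hl, hl'⟩)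
    refine ⟨⟨b1, b2, c1, c2, w, hc1, hc2, ⟨_, hlen.symm⟩, ha⟩, Or.inr (Or.inr ?_)⟩
    change v ∈ w.support
    rw [hs]
    simp [Fl]

/-- For a graph with a perfect matching `M`, every vertex of `V_SD(G)` belongs to
some `M`-Jposy (for this particular perfect matching `M`). -/
theorem inJposy_of_VSD (G : SimpleGraph V) (M : Finset (Sym2 V))
    (hM : IsPerfectMatching' G M) (v : V) (hv : v ∈ VSD G) :
    InJposy G M v := by
  obtain ⟨N, hN, hJ⟩ := hv
  have hN' := max_perfect hM hN
  obtain ⟨f, hf, hfN⟩ := exists_partner hN'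
  obtain ⟨g, hg, hgM⟩ := exists_partner hM
  exact inJposy_of_cond hg hgM (cond_transfer hf hg (cond_of_inJposy hN'.1 hf hfN hJ))
end
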